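/- arXiv:2204.01402 — 2 statements merged into one kernel-verified Lean document; each statement's English description precedes it below -/
import Mathlib

section
/- Let σ : Δ_d → ℝ^N be continuous, differentiable at every interior point of Δ_d, and of finite volume. Then the cone σ̂ : Δ_{d+1} → ℝ^N is continuous, differentiable at every interior point of Δ_{d+1}, and has finite volume. -/
open MeasureTheory Set

noncomputable section

/-- The standard `d`-simplex `Δ_d ⊆ ℝ^d`. -/
def simplexSet (d : ℕ) : Set (Fin d → ℝ) :=
  {b | (∀ i, 0 ≤ b i) ∧ ∑ i, b i ≤ 1}

/-- The `i`-th face map `δ_i : Δ_d → Δ_{d+1}` (as a map of ambient spaces):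
`δ_0 b = (1 - ∑ b, b)` and, for `i ≥ 1`, `δ_i` inserts a `0` at position `i - 1`. -/
def faceMap (d : ℕ) (i : Fin (d + 2)) (b : Fin d → ℝ) : Fin (d + 1) → ℝ :=
  if h : i = 0 then Fin.cons (1 - ∑ j, b j) b
  else Fin.insertNth (i.pred h) 0 b

/-- Continuous `d`-multilinear forms on `ℝ^N` (on finite-dimensional spaces every
multilinear form is automatically continuous). -/
abbrev Form (N d : ℕ) : Type :=
  ContinuousMultilinearMap ℝ (fun _ : Fin d => (Fin N → ℝ)) ℝ

/-- A multilinear form is alternating if it vanishes whenever two arguments agree. -/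
def IsAlternatingForm {N d : ℕ} (A : Form N d) : Prop :=
  ∀ v : Fin d → (Fin N → ℝ), ∀ i j, v i = v j → i ≠ j → A v = 0

/-- The pullback density `ω(σ(x))(Dσ(x)e_1, …, Dσ(x)e_d)` of a `d`-form `ω` along `σ`
at `x`, where `e_1, …, e_d` is the standard basis of `ℝ^d`. -/
def pullbackDensity {d N : ℕ} (σ : (Fin d → ℝ) → (Fin N → ℝ))
    (ω : (Fin N → ℝ) → Form N d) (x : Fin d → ℝ) : ℝ :=
  ω (σ x) fun j => fderiv ℝ σ x (Pi.single j 1)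

/-- A simplex `σ : Δ_d → ℝ^N` has finite volume if for every family of alternating
`d`-forms, continuous on `σ(Δ_d)`, the pullback density along `σ` is Lebesgue
integrable on the interior of `Δ_d`. -/
def FiniteVolume {d N : ℕ} (σ : (Fin d → ℝ) → (Fin N → ℝ)) : Prop :=
  ∀ ω : (Fin N → ℝ) → Form N d,
    (∀ y ∈ σ '' simplexSet d, IsAlternatingForm (ω y)) →
    ContinuousOn ω (σ '' simplexSet d) →
    IntegrableOn (pullbackDensity σ ω) (interior (simplexSet d))

/-- The pullback density of the exterior derivative `dω` of a `d`-form `ω` along a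
`(d+1)`-simplex `σ` at `x`:
`dω(y)(v_0, …, v_d) = ∑ i, (-1)^i (Dω(y)v_i)(v_0, …, v̂_i, …, v_d)` with `v_i = Dσ(x)e_i`. -/
def pullbackDensityD {d N : ℕ} (σ : (Fin (d + 1) → ℝ) → (Fin N → ℝ))
    (ω : (Fin N → ℝ) → Form N d) (x : Fin (d + 1) → ℝ) : ℝ :=
  ∑ i : Fin (d + 1), (-1 : ℝ) ^ (i : ℕ) *
    fderiv ℝ ω (σ x) (fderiv ℝ σ x (Pi.single i 1))
      (fun j => fderiv ℝ σ x (Pi.single (i.succAbove j) 1))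

/-- A `(d+1)`-simplex `σ` (C¹ on all open faces) satisfies Stokes if it and all of its
faces have finite volume, and Stokes' formula
`∫_{Δ_{d+1}} σ^*(dω) = ∑ i (-1)^i ∫_{Δ_d} (σ ∘ δ_i)^*(ω)` holds for every C¹ family of
alternating `d`-forms `ω` on an open neighbourhood of `σ(Δ_{d+1})`. -/
def SatisfiesStokes {d N : ℕ} (σ : (Fin (d + 1) → ℝ) → (Fin N → ℝ)) : Prop :=
  FiniteVolume σ ∧ (∀ i : Fin (d + 2), FiniteVolume (σ ∘ faceMap d i)) ∧
  ∀ (V : Set (Fin N → ℝ)) (ω : (Fin N → ℝ) → Form N d),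
    IsOpen V → σ '' simplexSet (d + 1) ⊆ V →
    (∀ y ∈ V, IsAlternatingForm (ω y)) → ContDiffOn ℝ 1 ω V →
    ∫ x in interior (simplexSet (d + 1)), pullbackDensityD σ ω x =
      ∑ i : Fin (d + 2), (-1 : ℝ) ^ (i : ℕ) *
        ∫ b in interior (simplexSet d), pullbackDensity (σ ∘ faceMap d i) ω b

/-- `σ : Δ_d → ℝ^N` is C¹ on all open faces: it is continuous on `Δ_d`, C¹ on the
interior of `Δ_d`, and all iterated face composites `σ ∘ δ_{i_1} ∘ ⋯ ∘ δ_{i_k}` have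
the same property. -/
def C1OnOpenFaces (N : ℕ) : ∀ d, ((Fin d → ℝ) → (Fin N → ℝ)) → Prop
  | 0, σ => ContinuousOn σ (simplexSet 0) ∧ ContDiffOn ℝ 1 σ (interior (simplexSet 0))
  | d + 1, σ => ContinuousOn σ (simplexSet (d + 1)) ∧
      ContDiffOn ℝ 1 σ (interior (simplexSet (d + 1))) ∧
      ∀ i : Fin (d + 2), C1OnOpenFaces N d (σ ∘ faceMap d i)

/-- `σ` and all of its iterated face composites have finite volume. -/
def FiniteVolumeFaces (N : ℕ) : ∀ d, ((Fin d → ℝ) → (Fin N → ℝ)) → Prop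
  | 0, σ => FiniteVolume σ
  | d + 1, σ => FiniteVolume σ ∧ ∀ i : Fin (d + 2), FiniteVolumeFaces N d (σ ∘ faceMap d i)

/-- `σ` and all of its iterated face composites satisfy Stokes
(a `0`-simplex satisfies Stokes by convention). -/
def SatisfiesStokesFaces (N : ℕ) : ∀ d, ((Fin d → ℝ) → (Fin N → ℝ)) → Prop
  | 0, _ => True
  | d + 1, σ => SatisfiesStokes σ ∧ ∀ i : Fin (d + 2), SatisfiesStokesFaces N d (σ ∘ faceMap d i)

/-- The cone `σ̂ : Δ_{d+1} → ℝ^N` over a simplex `σ : Δ_d → ℝ^N`: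
`σ̂(a_0, …, a_d) = A ⬝ σ(a_1/A, …, a_d/A)` with `A = ∑ a_i` if `A ≠ 0`, and `0` else. -/
def cone {d N : ℕ} (σ : (Fin d → ℝ) → (Fin N → ℝ)) (a : Fin (d + 1) → ℝ) : Fin N → ℝ :=
  if (∑ i, a i) = 0 then 0 else (∑ i, a i) • σ fun j => a j.succ / ∑ i, a i

/-- The map `q(t, b) = ((1-t)(1-∑ b), (1-t)b_1, …, (1-t)b_d)` from `[0,1] × Δ_d`
onto `Δ_{d+1}`. -/
def qMap (d : ℕ) (p : ℝ × (Fin d → ℝ)) : Fin (d + 1) → ℝ :=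
  Fin.cons ((1 - p.1) * (1 - ∑ j, p.2 j)) fun j => (1 - p.1) * p.2 j

/-- The inverse `i(a_0, …, a_d) = (1 - A, a_1/A, …, a_d/A)`, `A = ∑ a_i`, of `q`. -/
def iMap (d : ℕ) (a : Fin (d + 1) → ℝ) : ℝ × (Fin d → ℝ) :=
  (1 - ∑ i, a i, fun j => a j.succ / ∑ i, a i)

/-!
In the coordinates `q : [0,1] × Δ_d → Δ_{d+1}` the cone is `(t, b) ↦ (1 - t) σ(b)`. Since `q` is a
continuous surjection from a compact space, it is a quotient map, so the cone is continuous,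
including at the apex `0`, where its formula in `a_0, …, a_d` is singular. Over the interior, `q` is
a diffeomorphism with inverse `i`; pulling back a `(d+1)`-form along `q` multiplies its density by
the Jacobian determinant, which the change of variables formula absorbs. It remains to integrate
the density of `ω` along `(1 - t) σ(b)`, which is `-(1 - t)^d ω(σ(b), ∂_1 σ, …, ∂_d σ)`. Expanding
this as a `d`-form in the last `d` arguments of `ω` over the coordinate forms
`dx_{I 0} ∧ ⋯ ∧ dx_{I (d - 1)}`, its coefficients are continuous on the compact `[0,1] × Δ_d`, hence
bounded, and the density of each constant form along `σ` is integrable by finite volume.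
-/

section Topology

theorem continuousOn_image_of_isCompact {X Y Z : Type*} [TopologicalSpace X] [TopologicalSpace Y]
    [TopologicalSpace Z] [T2Space Y] {K : Set X} {q : X → Y} {f : Y → Z} (hK : IsCompact K)
    (hq : ContinuousOn q K) (hf : ContinuousOn (f ∘ q) K) : ContinuousOn f (q '' K) := by
  refine continuousOn_iff_isClosed.2 fun t ht => ?_
  obtain ⟨u, hu, hKu⟩ := continuousOn_iff_isClosed.1 hf t ht
  refine ⟨q '' (K ∩ u), ((hK.inter_right hu).image_of_continuousOn
    (hq.mono inter_subset_left)).isClosed, ?_⟩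
  rw [inter_comm K u, ← hKu, inter_eq_left.2 (image_mono inter_subset_right), preimage_comp,
    inter_comm, inter_comm _ K, ← image_inter_preimage]

theorem continuousOn_smul_comp_snd {X Y M E : Type*} [TopologicalSpace X] [TopologicalSpace Y]
    [TopologicalSpace M] [TopologicalSpace E] [SMul M E] [ContinuousSMul M E] {S : Set X}
    {T : Set Y} {g : X × Y → M} {f : Y → E} (hg : Continuous g) (hf : ContinuousOn f T) :
    ContinuousOn (fun p => g p • f p.2) (S ×ˢ T) :=
  hg.continuousOn.smul (hf.comp continuousOn_snd mapsTo_snd_prod)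

theorem continuousOn_curryLeft_apply {X 𝕜 G : Type*} {n : ℕ} {E : Fin (n + 1) → Type*}
    [TopologicalSpace X] [NontriviallyNormedField 𝕜] [∀ i, NormedAddCommGroup (E i)]
    [∀ i, NormedSpace 𝕜 (E i)] [NormedAddCommGroup G] [NormedSpace 𝕜 G]
    {A : X → ContinuousMultilinearMap 𝕜 E G} {v : X → E 0} {S : Set X} (hA : ContinuousOn A S)
    (hv : ContinuousOn v S) : ContinuousOn (fun x => (A x).curryLeft (v x)) S :=
  ((continuousMultilinearCurryLeftEquiv 𝕜 E G).continuous.comp_continuousOn hA).clm_apply hv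

end Topology

section Alternating

theorem alternatingMap_apply_eq_sum_det_smul {R M P ι : Type*} [CommRing R] [AddCommGroup M]
    [Module R M] [AddCommGroup P] [Module R P] [LinearOrder ι] [Fintype ι] {n : ℕ}
    (b : Module.Basis ι R M) (f : M [⋀^Fin n]→ₗ[R] P) (v : Fin n → M) :
    f v = ∑ s : powersetCard ι n,
      (Matrix.of fun i j => b.repr (v i) (powersetCard.ofFinEmbEquiv.symm s j)).det •
        f (b ∘ powersetCard.ofFinEmbEquiv.symm s) := by
  have h := congrArg (exteriorPower.alternatingMapLinearEquiv f)
    ((b.exteriorPower n).sum_repr (exteriorPower.ιMulti R n v))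
  simp only [map_sum, map_smul, exteriorPower.basis_repr_apply,
    exteriorPower.ιMultiDual_apply_ιMulti, exteriorPower.basis_apply,
    exteriorPower.ιMulti_family, exteriorPower.alternatingMapLinearEquiv_apply_ιMulti] at h
  exact h.symm

theorem alternatingMap_comp_linearMap_eq_det_mul {R M ι : Type*} [CommRing R] [AddCommGroup M]
    [Module R M] [Finite ι] (e : Module.Basis ι R M) (f : M [⋀^ι]→ₗ[R] R) (T : M →ₗ[R] M)
    (v : ι → M) : f (T ∘ v) = LinearMap.det T * f v := by
  classical
  have := Fintype.ofFinite ι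
  rw [f.eq_smul_basis_det e]
  simp only [AlternatingMap.smul_apply, Module.Basis.det_comp, smul_eq_mul]
  ring

variable {N d : ℕ}

/-- An alternating `Form`, bundled as an `AlternatingMap` so that Mathlib's theory of determinants
and exterior powers applies. -/
def IsAlternatingForm.toAlternatingMap {A : Form N d} (hA : IsAlternatingForm A) :
    (Fin N → ℝ) [⋀^Fin d]→ₗ[ℝ] ℝ :=
  { A.toMultilinearMap with map_eq_zero_of_eq' := hA }

theorem IsAlternatingForm.curryLeft {A : Form N (d + 1)} (hA : IsAlternatingForm A)
    (s : Fin N → ℝ) : IsAlternatingForm (ContinuousMultilinearMap.curryLeft A s : Form N d) :=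
  fun v i j hv hij => hA (Fin.cons s v) i.succ j.succ (by simpa using hv) (by simpa using hij)

/-- The coordinate form `dx_{I 0} ∧ ⋯ ∧ dx_{I (d - 1)}` on `ℝ^N`, encoded as the minor of the
matrix with rows `v_i` on the columns selected by `I`. -/
def minorForm (I : Fin d → Fin N) : Form N d where
  toMultilinearMap := (Matrix.detRowAlternating.compLinearMap
    (LinearMap.funLeft ℝ ℝ I)).toMultilinearMap
  cont := Continuous.matrix_det (A := fun v : Fin d → Fin N → ℝ => Matrix.of fun i j => v i (I j))
    (by fun_prop)

theorem minorForm_apply (I : Fin d → Fin N) (v : Fin d → Fin N → ℝ) :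
    minorForm I v = (Matrix.of fun i j => v i (I j)).det :=
  rfl

theorem isAlternatingForm_minorForm (I : Fin d → Fin N) : IsAlternatingForm (minorForm I) :=
  (Matrix.detRowAlternating.compLinearMap (LinearMap.funLeft ℝ ℝ I)).map_eq_zero_of_eq

theorem IsAlternatingForm.apply_eq_sum_minorForm {A : Form N d} (hA : IsAlternatingForm A)
    (v : Fin d → Fin N → ℝ) :
    A v = ∑ s : powersetCard (Fin N) d,
      A (fun j => Pi.single (powersetCard.ofFinEmbEquiv.symm s j) 1) *
        minorForm (powersetCard.ofFinEmbEquiv.symm s) v := by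
  refine (alternatingMap_apply_eq_sum_det_smul (Pi.basisFun ℝ (Fin N)) hA.toAlternatingMap v).trans
    (Finset.sum_congr rfl fun s _ => ?_)
  rw [smul_eq_mul, mul_comm, minorForm_apply]
  simp only [Pi.basisFun_repr, Function.comp_def, Pi.basisFun_apply]
  rfl

end Alternating

section Integrability

theorem integrable_mul_of_abs_le {X : Type*} [MeasurableSpace X] {μ : Measure X}
    {u v f : X → ℝ} (hu : AEMeasurable u μ) (hv : AEMeasurable v μ) (huv : ∀ᵐ x ∂μ, |u x| ≤ |v x|)
    (hf : Integrable (fun x => v x * f x) μ) : Integrable (fun x => u x * f x) μ := by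
  -- `u` is `v` times the bounded function `u / v`, also at the zeros of `v`, where `u / v = 0`.
  have hratio : ∀ᵐ x ∂μ, ‖(u / v) x‖ ≤ 1 := by
    filter_upwards [huv] with x hx
    rw [Pi.div_apply, norm_div]
    exact div_le_one_of_le₀ hx (norm_nonneg _)
  refine (hf.bdd_mul (hu.div hv).aestronglyMeasurable hratio).congr ?_
  filter_upwards [huv] with x hx
  have hzero : v x = 0 → u x = 0 := fun h => by simpa [h] using hx
  rw [Pi.div_apply, ← mul_assoc, div_mul_cancel_of_imp hzero]

theorem integrable_abs_mul_iff {X : Type*} [MeasurableSpace X] {μ : Measure X}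
    {g f : X → ℝ} (hg : AEMeasurable g μ) :
    Integrable (fun x => |g x| * f x) μ ↔ Integrable (fun x => g x * f x) μ :=
  ⟨integrable_mul_of_abs_le hg hg.abs (.of_forall fun x => (abs_abs (g x)).ge),
    integrable_mul_of_abs_le hg.abs hg (.of_forall fun x => (abs_abs (g x)).le)⟩

theorem integrable_alternatingForm_apply {X : Type*} [MeasurableSpace X] {μ : Measure X} {N d : ℕ}
    {α : X → Form N d} {v : X → Fin d → Fin N → ℝ} {C : ℝ} (hα : AEStronglyMeasurable α μ)
    (hC : ∀ᵐ x ∂μ, ‖α x‖ ≤ C) (halt : ∀ᵐ x ∂μ, IsAlternatingForm (α x))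
    (hv : ∀ I : Fin d → Fin N, Integrable (fun x => minorForm I (v x)) μ) :
    Integrable (fun x => α x (v x)) μ := by
  have hsummand (s : powersetCard (Fin N) d) : Integrable (fun x =>
      α x (fun j => Pi.single (powersetCard.ofFinEmbEquiv.symm s j) 1) *
        minorForm (powersetCard.ofFinEmbEquiv.symm s) (v x)) μ := by
    set e : Fin d → Fin N → ℝ := fun j => Pi.single (powersetCard.ofFinEmbEquiv.symm s j) 1
    refine (hv _).bdd_mul (c := C * ∏ j, ‖e j‖)
      ((ContinuousMultilinearMap.apply ℝ _ ℝ e).continuous.comp_aestronglyMeasurable hα) ?_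
    filter_upwards [hC] with x hx using (α x).le_of_opNorm_le hx e
  refine (integrable_finsetSum Finset.univ fun s _ => hsummand s).congr ?_
  filter_upwards [halt] with x hx using (hx.apply_eq_sum_minorForm (v x)).symm

end Integrability

section PullbackDensity

variable {d N : ℕ}

theorem pullbackDensity_comp {σ : (Fin d → ℝ) → (Fin N → ℝ)} {φ : (Fin d → ℝ) → (Fin d → ℝ)}
    {ω : (Fin N → ℝ) → Form N d} {x : Fin d → ℝ} (hσ : DifferentiableAt ℝ σ (φ x))
    (hφ : DifferentiableAt ℝ φ x) (hω : IsAlternatingForm (ω (σ (φ x)))) :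
    pullbackDensity (σ ∘ φ) ω x = (fderiv ℝ φ x).det * pullbackDensity σ ω (φ x) := by
  rw [pullbackDensity, fderiv_comp x hσ hφ]
  exact alternatingMap_comp_linearMap_eq_det_mul (Pi.basisFun ℝ (Fin d))
    (hω.toAlternatingMap.compLinearMap (fderiv ℝ σ (φ x)).toLinearMap) (fderiv ℝ φ x).toLinearMap
    fun j => Pi.single j 1

theorem integrableOn_pullbackDensity_image_iff {σ : (Fin d → ℝ) → (Fin N → ℝ)}
    {φ : (Fin d → ℝ) → (Fin d → ℝ)} {ω : (Fin N → ℝ) → Form N d} {S : Set (Fin d → ℝ)}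
    (hS : MeasurableSet S) (hφ : ∀ x ∈ S, DifferentiableAt ℝ φ x) (hinj : InjOn φ S)
    (hσ : ∀ y ∈ φ '' S, DifferentiableAt ℝ σ y)
    (hω : ∀ y ∈ φ '' S, IsAlternatingForm (ω (σ y))) :
    IntegrableOn (pullbackDensity σ ω) (φ '' S) ↔
      IntegrableOn (pullbackDensity (σ ∘ φ) ω) S := by
  have hdet : Measurable fun x => (fderiv ℝ φ x).det :=
    ContinuousLinearMap.continuous_det.measurable.comp (measurable_fderiv ℝ φ)
  rw [integrableOn_image_iff_integrableOn_abs_det_fderiv_smul volume hS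
    (fun x hx => (hφ x hx).hasFDerivAt.hasFDerivWithinAt) hinj]
  refine (integrable_abs_mul_iff hdet.aemeasurable).trans
    (integrableOn_congr_fun (fun x hx => ?_) hS)
  exact (pullbackDensity_comp (hσ _ (mem_image_of_mem φ hx)) (hφ x hx)
    (hω _ (mem_image_of_mem φ hx))).symm

theorem FiniteVolume.integrable_form_apply {T : Type*} [MeasurableSpace T] {μ : Measure T}
    [IsFiniteMeasure μ] {σ : (Fin d → ℝ) → (Fin N → ℝ)} (hσ : FiniteVolume σ)
    {α : T × (Fin d → ℝ) → Form N d} {C : ℝ}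
    (hα : AEStronglyMeasurable α (μ.prod (volume.restrict (interior (simplexSet d)))))
    (hC : ∀ᵐ p ∂μ.prod (volume.restrict (interior (simplexSet d))), ‖α p‖ ≤ C)
    (halt : ∀ᵐ p ∂μ.prod (volume.restrict (interior (simplexSet d))), IsAlternatingForm (α p)) :
    Integrable (fun p => α p fun j => fderiv ℝ σ p.2 (Pi.single j 1))
      (μ.prod (volume.restrict (interior (simplexSet d)))) :=
  integrable_alternatingForm_apply hα hC halt fun I =>
    Integrable.comp_snd (hσ (fun _ => minorForm I)
      (fun _ _ => isAlternatingForm_minorForm I) continuousOn_const) μ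

theorem pullbackDensity_smul_tail {σ : (Fin d → ℝ) → (Fin N → ℝ)}
    {ω : (Fin N → ℝ) → Form N (d + 1)} {r : ℝ → ℝ} {r' : ℝ} {x : Fin (d + 1) → ℝ}
    (hr : HasDerivAt r r' (x 0)) (hσ : DifferentiableAt ℝ σ (Fin.tail x)) :
    pullbackDensity (fun y => r (y 0) • σ (Fin.tail y)) ω x =
      (ω (r (x 0) • σ (Fin.tail x))).curryLeft ((r' * r (x 0) ^ d) • σ (Fin.tail x))
        fun j => fderiv ℝ σ (Fin.tail x) (Pi.single j 1) := by
  let tailL : (Fin (d + 1) → ℝ) →L[ℝ] (Fin d → ℝ) := .pi fun j => .proj j.succ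
  have hτ := (hr.comp_hasFDerivAt x (hasFDerivAt_apply (𝕜 := ℝ) 0 x)).smul
    (HasFDerivAt.comp x hσ.hasFDerivAt tailL.hasFDerivAt)
  have htail_zero : tailL (Pi.single 0 1) = 0 := by ext; simp [tailL]
  have htail_succ (j : Fin d) : tailL (Pi.single j.succ 1) = Pi.single j 1 := by
    ext; simp [tailL, Pi.single_apply]
  have hpartial : (fun i => fderiv ℝ (fun y => r (y 0) • σ (Fin.tail y)) x (Pi.single i 1)) =
      fun i => (Fin.cons r' fun _ => r (x 0) : Fin (d + 1) → ℝ) i •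
        (Fin.cons (σ (Fin.tail x)) fun j => fderiv ℝ σ (Fin.tail x) (Pi.single j 1) :
          Fin (d + 1) → Fin N → ℝ) i := by
    funext i
    rw [show fderiv ℝ (fun y => r (y 0) • σ (Fin.tail y)) x = _ from hτ.fderiv]
    refine Fin.cases ?_ (fun j => ?_) i
    · simp [htail_zero]
    · simp [htail_succ]
  rw [pullbackDensity, hpartial, ContinuousMultilinearMap.map_smul_univ]
  simp [Fin.prod_univ_succ]

end PullbackDensity

section Simplex

theorem interior_setOf_sum_le {ι : Type*} [Fintype ι] {c : ℝ} (hc : c ≠ 0) :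
    interior {b : ι → ℝ | ∑ i, b i ≤ c} = {b | ∑ i, b i < c} := by
  classical
  rcases isEmpty_or_nonempty ι with _ | ⟨⟨i₀⟩⟩
  · simp [hc.symm.le_iff_lt, interior_eq_iff_isOpen]
  · let sumL : (ι → ℝ) →ₗ[ℝ] ℝ := ∑ i, LinearMap.proj i
    have hsumL : ⇑sumL = fun b => ∑ i, b i := by ext; simp [sumL]
    have hsurj : Function.Surjective sumL := fun t => ⟨Pi.single i₀ t, by simp [hsumL]⟩
    have hopen := (sumL.isOpenMap_of_finiteDimensional hsurj).preimage_interior_eq_interior_preimage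
      sumL.continuous_of_finiteDimensional (Iic c)
    rw [interior_Iic, hsumL] at hopen
    exact hopen.symm

theorem simplexSet_eq_inter (d : ℕ) :
    simplexSet d = univ.pi (fun _ => Ici 0) ∩ {b | ∑ i, b i ≤ 1} := by
  ext b
  simp [simplexSet, Pi.le_def]

theorem isCompact_simplexSet (d : ℕ) : IsCompact (simplexSet d) := by
  have hclosed : IsClosed (simplexSet d) := by
    rw [simplexSet_eq_inter]
    exact (isClosed_set_pi fun _ _ => isClosed_Ici).inter
      (isClosed_le (by fun_prop) continuous_const)
  refine (isCompact_Icc (a := (0 : Fin d → ℝ)) (b := 1)).of_isClosed_subset hclosed ?_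
  rintro b ⟨hb, hsum⟩
  exact ⟨hb, fun i => (Finset.single_le_sum (fun j _ => hb j) (Finset.mem_univ i)).trans hsum⟩

theorem interior_simplexSet (d : ℕ) :
    interior (simplexSet d) = {b | (∀ i, 0 < b i) ∧ ∑ i, b i < 1} := by
  rw [simplexSet_eq_inter, interior_inter, interior_pi_set finite_univ,
    interior_setOf_sum_le one_ne_zero]
  ext b
  simp

end Simplex

section QMap

variable {d : ℕ}

theorem sum_qMap (p : ℝ × (Fin d → ℝ)) : ∑ i, qMap d p i = 1 - p.1 := by
  simp only [qMap, Fin.sum_univ_succ, Fin.cons_zero, Fin.cons_succ, ← Finset.mul_sum]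
  ring

theorem iMap_qMap {p : ℝ × (Fin d → ℝ)} (hp : p.1 ≠ 1) : iMap d (qMap d p) = p := by
  have h : 1 - p.1 ≠ 0 := sub_ne_zero.2 hp.symm
  ext j
  · simp [iMap, sum_qMap]
  · simp only [iMap, sum_qMap]
    simp [qMap, h]

theorem qMap_iMap {a : Fin (d + 1) → ℝ} (ha : ∑ i, a i ≠ 0) : qMap d (iMap d a) = a := by
  ext i
  refine Fin.cases ?_ (fun j => ?_) i
  · simp only [qMap, iMap, Fin.cons_zero, ← Finset.sum_div, sub_sub_cancel]
    rw [mul_sub, mul_one, mul_div_cancel₀ _ ha, Fin.sum_univ_succ, add_sub_cancel_right]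
  · simp [qMap, iMap, mul_div_cancel₀ _ ha]

theorem differentiable_qMap : Differentiable ℝ (qMap d) := by
  refine differentiable_pi.2 (Fin.cases ?_ fun j => ?_)
  · simp only [qMap, Fin.cons_zero]
    fun_prop
  · simp only [qMap, Fin.cons_succ]
    fun_prop

theorem differentiableAt_iMap {a : Fin (d + 1) → ℝ} (ha : ∑ i, a i ≠ 0) :
    DifferentiableAt ℝ (iMap d) a := by
  unfold iMap
  fun_prop (disch := assumption)

theorem mapsTo_qMap : MapsTo (qMap d) (Icc 0 1 ×ˢ simplexSet d) (simplexSet (d + 1)) := by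
  rintro ⟨t, b⟩ ⟨ht, hb⟩
  exact ⟨Fin.cases (mul_nonneg (sub_nonneg.2 ht.2) (sub_nonneg.2 hb.2))
    fun j => mul_nonneg (sub_nonneg.2 ht.2) (hb.1 j), by simpa [sum_qMap] using ht.1⟩

theorem mapsTo_qMap_interior :
    MapsTo (qMap d) (Ioo 0 1 ×ˢ interior (simplexSet d)) (interior (simplexSet (d + 1))) := by
  simp only [interior_simplexSet]
  rintro ⟨t, b⟩ ⟨ht, hb⟩
  exact ⟨Fin.cases (mul_pos (sub_pos.2 ht.2) (sub_pos.2 hb.2))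
    fun j => mul_pos (sub_pos.2 ht.2) (hb.1 j), by simpa [sum_qMap] using ht.1⟩

theorem sum_pos_of_mem_interior_simplexSet {a : Fin (d + 1) → ℝ}
    (ha : a ∈ interior (simplexSet (d + 1))) : 0 < ∑ i, a i := by
  rw [interior_simplexSet] at ha
  exact Finset.sum_pos (fun i _ => ha.1 i) Finset.univ_nonempty

theorem iMap_mem {a : Fin (d + 1) → ℝ} (ha : a ∈ simplexSet (d + 1)) (hpos : 0 < ∑ i, a i) :
    iMap d a ∈ Icc (0 : ℝ) 1 ×ˢ simplexSet d := by
  refine ⟨⟨sub_nonneg.2 ha.2, sub_le_self 1 hpos.le⟩, fun j => div_nonneg (ha.1 _) hpos.le, ?_⟩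
  simp only [iMap]
  rw [← Finset.sum_div, div_le_one hpos, Fin.sum_univ_succ]
  exact le_add_of_nonneg_left (ha.1 0)

theorem mapsTo_iMap_interior :
    MapsTo (iMap d) (interior (simplexSet (d + 1))) (Ioo 0 1 ×ˢ interior (simplexSet d)) := by
  intro a ha
  have hpos := sum_pos_of_mem_interior_simplexSet ha
  rw [interior_simplexSet] at ha ⊢
  refine ⟨⟨sub_pos.2 ha.2, sub_lt_self 1 hpos⟩, fun j => div_pos (ha.1 _) hpos, ?_⟩
  simp only [iMap]
  rw [← Finset.sum_div, div_lt_one hpos, Fin.sum_univ_succ]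
  exact lt_add_of_pos_left _ (ha.1 0)

theorem bijOn_qMap_interior :
    BijOn (qMap d) (Ioo 0 1 ×ˢ interior (simplexSet d)) (interior (simplexSet (d + 1))) :=
  InvOn.bijOn (f' := iMap d) ⟨fun _ hp => iMap_qMap hp.1.2.ne,
    fun _ ha => qMap_iMap (sum_pos_of_mem_interior_simplexSet ha).ne'⟩
    mapsTo_qMap_interior mapsTo_iMap_interior

theorem image_qMap : qMap d '' (Icc 0 1 ×ˢ simplexSet d) = simplexSet (d + 1) := by
  refine mapsTo_qMap.image_subset.antisymm fun a ha => ?_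
  rcases (Finset.sum_nonneg fun i _ => ha.1 i).eq_or_lt with hzero | hpos
  · have ha_zero : a = 0 :=
      funext fun i => (Finset.sum_eq_zero_iff_of_nonneg fun i _ => ha.1 i).1 hzero.symm i
        (Finset.mem_univ i)
    refine ⟨(1, 0), ⟨by simp, by simp [simplexSet]⟩, ?_⟩
    rw [ha_zero]
    ext i
    refine Fin.cases ?_ (fun j => ?_) i <;> simp [qMap]
  · exact ⟨iMap d a, iMap_mem ha hpos, qMap_iMap hpos.ne'⟩

end QMap

section Cone

variable {d N : ℕ}

theorem cone_eq_smul_iMap (σ : (Fin d → ℝ) → (Fin N → ℝ)) (a : Fin (d + 1) → ℝ) :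
    cone σ a = (1 - (iMap d a).1) • σ (iMap d a).2 := by
  by_cases ha : ∑ i, a i = 0 <;> simp [cone, iMap, ha]

theorem cone_qMap (σ : (Fin d → ℝ) → (Fin N → ℝ)) (p : ℝ × (Fin d → ℝ)) :
    cone σ (qMap d p) = (1 - p.1) • σ p.2 := by
  by_cases hp : p.1 = 1
  · simp [cone, sum_qMap, hp]
  · rw [cone_eq_smul_iMap, iMap_qMap hp]

theorem continuousOn_cone {σ : (Fin d → ℝ) → (Fin N → ℝ)}
    (hσ : ContinuousOn σ (simplexSet d)) : ContinuousOn (cone σ) (simplexSet (d + 1)) := by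
  rw [← image_qMap]
  refine continuousOn_image_of_isCompact (isCompact_Icc.prod (isCompact_simplexSet d))
    differentiable_qMap.continuous.continuousOn ?_
  exact (continuousOn_smul_comp_snd (by fun_prop) hσ).congr fun p _ => cone_qMap σ p

theorem differentiableAt_cone {σ : (Fin d → ℝ) → (Fin N → ℝ)}
    (hσ : DifferentiableOn ℝ σ (interior (simplexSet d))) {a : Fin (d + 1) → ℝ}
    (ha : a ∈ interior (simplexSet (d + 1))) : DifferentiableAt ℝ (cone σ) a := by
  have hi := differentiableAt_iMap (sum_pos_of_mem_interior_simplexSet ha).ne'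
  have hσi : DifferentiableAt ℝ σ (iMap d a).2 :=
    hσ.differentiableAt (isOpen_interior.mem_nhds (mapsTo_iMap_interior ha).2)
  rw [funext (cone_eq_smul_iMap σ)]
  exact (hi.fst.const_sub 1).smul (hσi.comp a hi.snd)

end Cone

section SplitHead

/-- The identification `ℝ^{d+1} ≃ ℝ × ℝ^d` splitting off the coordinate `0`. Precomposing `qMap d`
with it gives a map of `ℝ^{d+1}` to itself, for which a Jacobian determinant makes sense. -/
def splitHead (d : ℕ) : (Fin (d + 1) → ℝ) ≃L[ℝ] ℝ × (Fin d → ℝ) :=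
  (Fin.consEquivL ℝ fun _ : Fin (d + 1) => ℝ).symm

variable {d : ℕ}

theorem integrableOn_comp_splitHead_iff {f : ℝ × (Fin d → ℝ) → ℝ} {S : Set (ℝ × (Fin d → ℝ))} :
    IntegrableOn (f ∘ splitHead d) (splitHead d ⁻¹' S) ↔ IntegrableOn f S :=
  (volume_preserving_piFinSuccAbove (fun _ : Fin (d + 1) => ℝ) 0).integrableOn_comp_preimage
    (MeasurableEquiv.measurableEmbedding _)

theorem bijOn_qMap_comp_splitHead :
    BijOn (qMap d ∘ splitHead d) (splitHead d ⁻¹' (Ioo 0 1 ×ˢ interior (simplexSet d)))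
      (interior (simplexSet (d + 1))) :=
  bijOn_qMap_interior.comp ((splitHead d).bijective.bijOn_preimage)

end SplitHead

section FiniteVolume

variable {d N : ℕ} {σ : (Fin d → ℝ) → (Fin N → ℝ)}

theorem FiniteVolume.integrableOn_form_apply (hσ : FiniteVolume σ) {I : Set ℝ} (hI : IsCompact I)
    {α : ℝ × (Fin d → ℝ) → Form N d} (hα : ContinuousOn α (I ×ˢ simplexSet d))
    (halt : ∀ p ∈ I ×ˢ simplexSet d, IsAlternatingForm (α p)) :
    IntegrableOn (fun p => α p fun j => fderiv ℝ σ p.2 (Pi.single j 1))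
      (I ×ˢ interior (simplexSet d)) := by
  have hmeas : MeasurableSet (I ×ˢ interior (simplexSet d)) :=
    hI.measurableSet.prod isOpen_interior.measurableSet
  have hsub : I ×ˢ interior (simplexSet d) ⊆ I ×ˢ simplexSet d :=
    prod_mono_right interior_subset
  obtain ⟨C, hC⟩ := (hI.prod (isCompact_simplexSet d)).exists_bound_of_continuousOn hα
  have : IsFiniteMeasure (volume.restrict I) := isFiniteMeasure_restrict.2 hI.measure_lt_top.ne
  have hrestrict : (volume : Measure (ℝ × (Fin d → ℝ))).restrict (I ×ˢ interior (simplexSet d)) =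
      (volume.restrict I).prod (volume.restrict (interior (simplexSet d))) :=
    (Measure.prod_restrict _ _).symm
  rw [IntegrableOn, hrestrict]
  refine hσ.integrable_form_apply (C := C) ?_ ?_ ?_ <;> rw [← hrestrict]
  · exact (hα.mono hsub).aestronglyMeasurable hmeas
  · exact ae_restrict_of_forall_mem hmeas fun p hp => hC p (hsub hp)
  · exact ae_restrict_of_forall_mem hmeas fun p hp => halt p (hsub hp)

theorem FiniteVolume.integrableOn_pullbackDensity_cone_comp_qMap (hv : FiniteVolume σ)
    (hc : ContinuousOn σ (simplexSet d))
    (hd : DifferentiableOn ℝ σ (interior (simplexSet d)))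
    {ω : (Fin N → ℝ) → Form N (d + 1)}
    (halt : ∀ y ∈ cone σ '' simplexSet (d + 1), IsAlternatingForm (ω y))
    (hω : ContinuousOn ω (cone σ '' simplexSet (d + 1))) :
    IntegrableOn (pullbackDensity (cone σ ∘ qMap d ∘ splitHead d) ω)
      (splitHead d ⁻¹' (Ioo 0 1 ×ˢ interior (simplexSet d))) := by
  let α (p : ℝ × (Fin d → ℝ)) : Form N d :=
    (ω ((1 - p.1) • σ p.2)).curryLeft ((-1 * (1 - p.1) ^ d) • σ p.2)
  have hmaps : MapsTo (fun p : ℝ × (Fin d → ℝ) => (1 - p.1) • σ p.2) (Icc 0 1 ×ˢ simplexSet d)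
      (cone σ '' simplexSet (d + 1)) :=
    fun p hp => ⟨qMap d p, mapsTo_qMap hp, cone_qMap σ p⟩
  have hα : ContinuousOn α (Icc 0 1 ×ˢ simplexSet d) :=
    continuousOn_curryLeft_apply (hω.comp (continuousOn_smul_comp_snd (by fun_prop) hc) hmaps)
      (continuousOn_smul_comp_snd (by fun_prop) hc)
  have hint := (hv.integrableOn_form_apply isCompact_Icc hα fun p hp =>
    (halt _ (hmaps hp)).curryLeft _).mono_set (prod_mono_left Ioo_subset_Icc_self)
  have hopen : IsOpen (splitHead d ⁻¹' (Ioo 0 1 ×ˢ interior (simplexSet d))) :=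
    (isOpen_Ioo.prod isOpen_interior).preimage (splitHead d).continuous
  refine (integrableOn_comp_splitHead_iff.2 hint).congr_fun (fun x hx => ?_) hopen.measurableSet
  have hcone : cone σ ∘ qMap d ∘ splitHead d = fun y => (1 - y 0) • σ (Fin.tail y) :=
    funext fun y => cone_qMap σ (splitHead d y)
  rw [hcone]
  exact (pullbackDensity_smul_tail ((hasDerivAt_id (x 0)).const_sub 1)
    (hd.differentiableAt (isOpen_interior.mem_nhds hx.2))).symm

theorem FiniteVolume.cone (hv : FiniteVolume σ) (hc : ContinuousOn σ (simplexSet d))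
    (hd : DifferentiableOn ℝ σ (interior (simplexSet d))) : FiniteVolume (cone σ) := by
  intro ω halt hω
  have hq : Differentiable ℝ (qMap d ∘ splitHead d) :=
    differentiable_qMap.comp (splitHead d).differentiable
  have hopen : IsOpen (splitHead d ⁻¹' (Ioo 0 1 ×ˢ interior (simplexSet d))) :=
    (isOpen_Ioo.prod isOpen_interior).preimage (splitHead d).continuous
  have himage := (bijOn_qMap_comp_splitHead (d := d)).image_eq
  rw [← himage, integrableOn_pullbackDensity_image_iff hopen.measurableSet (fun x _ => hq x)
    bijOn_qMap_comp_splitHead.injOn]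
  · exact hv.integrableOn_pullbackDensity_cone_comp_qMap hc hd halt hω
  · exact himage ▸ fun a ha => differentiableAt_cone hd ha
  · exact himage ▸ fun a ha => halt _ (mem_image_of_mem _ (interior_subset ha))

end FiniteVolume

/-- **Proposition 2.5.** If `σ : Δ_d → ℝ^N` is continuous, differentiable on the interior
of `Δ_d`, and of finite volume, then the cone `σ̂ : Δ_{d+1} → ℝ^N` is continuous,
differentiable on the interior of `Δ_{d+1}`, and has finite volume. -/
theorem cone_finiteVolume {d N : ℕ} (σ : (Fin d → ℝ) → (Fin N → ℝ))
    (hc : ContinuousOn σ (simplexSet d))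
    (hd : DifferentiableOn ℝ σ (interior (simplexSet d)))
    (hv : FiniteVolume σ) :
    ContinuousOn (cone σ) (simplexSet (d + 1)) ∧
    DifferentiableOn ℝ (cone σ) (interior (simplexSet (d + 1))) ∧
    FiniteVolume (cone σ) := by
  exact ⟨continuousOn_cone hc,
    fun a ha => (differentiableAt_cone hd ha).differentiableWithinAt, hv.cone hc hd⟩

end
end

section
/- Let V be a module over ℝ, d ≥ 1, and A an alternating d-linear form on V with values in ℝ. Then for all u, y_1, …, y_d ∈ V and all scalars c_1, …, c_d, e ∈ ℝ: A(c_1·u + e·y_1, …, c_d·u + e·y_d) = e^d·A(y_1,…,y_d) + e^{d−1}·Σ_{i=1}^d (−1)^{i−1} c_i·A(u, y_1, …, y_{i−1}, y_{i+1}, …, y_d), where in the i-th summand the argument y_i is omitted and u is inserted in the first slot. -/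
open MeasureTheory Set

noncomputable section

/-!
Expanding in the `u`-components, every term with two or more arguments proportional to `u`
vanishes because the form is alternating. What remains is the constant term and the terms linear
in `u`; moving `u` from slot `i` to the front of the latter gives the sign `(-1) ^ i`.
-/

section AlternatingMap

variable {R M N ι : Type*}

theorem alternatingMap_eq_zero_of_eq_smul [Semiring R] [AddCommMonoid M] [Module R M]
    [AddCommMonoid N] [Module R N] (f : M [⋀^ι]→ₗ[R] N) {v : ι → M} {u : M} {a b : R} {i j : ι}
    (hi : v i = a • u) (hj : v j = b • u) (hij : i ≠ j) : f v = 0 := by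
  classical
  have hv : v = Function.update (Function.update v i (a • u)) j (b • u) := by
    rw [← hi, ← hj, Function.update_eq_self, Function.update_eq_self]
  rw [hv, f.map_update_smul, Function.update_comm hij, f.map_update_smul,
    f.map_eq_zero_of_eq _ (by rw [Function.update_self, Function.update_of_ne hij.symm,
      Function.update_self]) hij, smul_zero, smul_zero]

theorem alternatingMap_add_smul_const [Semiring R] [AddCommGroup M] [Module R M]
    [AddCommGroup N] [Module R N] [Fintype ι] [DecidableEq ι] (f : M [⋀^ι]→ₗ[R] N)
    (w : ι → M) (c : ι → R) (u : M) :
    f (w + fun i => c i • u) = f w + ∑ i, c i • f (Function.update w i u) := by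
  have higher_order_eq_zero (s : Finset ι) (hs : 2 ≤ s.card) :
      f (s.piecewise (fun i => c i • u) w) = 0 := by
    obtain ⟨i, hi, j, hj, hij⟩ := Finset.one_lt_card.mp hs
    exact alternatingMap_eq_zero_of_eq_smul f (s.piecewise_eq_of_mem _ _ hi)
      (s.piecewise_eq_of_mem _ _ hj) hij
  calc f (w + fun i => c i • u)
      = f w + f.toMultilinearMap.linearDeriv w (fun i => c i • u) +
          ∑ s : Finset ι with 2 ≤ s.card, f (s.piecewise (fun i => c i • u) w) :=
        f.toMultilinearMap.map_add_eq_map_add_linearDeriv_add w _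
    _ = f w + f.toMultilinearMap.linearDeriv w (fun i => c i • u) := by
        rw [Finset.sum_eq_zero fun s hs => higher_order_eq_zero s (Finset.mem_filter.mp hs).2,
          add_zero]
    _ = f w + ∑ i, c i • f (Function.update w i u) := by simp

variable [CommRing R] [AddCommGroup M] [Module R M] [AddCommGroup N] [Module R N] {d : ℕ}

theorem alternatingMap_update_eq_neg_one_pow_smul (f : M [⋀^Fin (d + 1)]→ₗ[R] N)
    (y : Fin (d + 1) → M) (i : Fin (d + 1)) (u : M) :
    f (Function.update y i u) = (-1 : R) ^ (i : ℕ) • f (Fin.cons u (i.removeNth y)) := by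
  rw [← Fin.insertNth_removeNth, f.map_insertNth, ← Int.cast_smul_eq_zsmul R]
  norm_cast

theorem alternatingMap_smul_add_expansion_general (f : M [⋀^Fin (d + 1)]→ₗ[R] N) (u : M)
    (y : Fin (d + 1) → M) (c : Fin (d + 1) → R) (e : R) :
    f (fun i => c i • u + e • y i) =
      e ^ (d + 1) • f y +
        e ^ d • ∑ i : Fin (d + 1), ((-1) ^ (i : ℕ) * c i) • f (Fin.cons u (i.removeNth y)) := by
  have scale_all : f (e • y) = e ^ (d + 1) • f y :=
    (f.map_smul_univ (fun _ => e) y).trans (by simp)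
  have scale_others (i : Fin (d + 1)) :
      f (Function.update (e • y) i u) = e ^ d • f (Function.update y i u) :=
    (f.toMultilinearMap.map_update_smul_left y i e u).trans (by simp)
  calc f (fun i => c i • u + e • y i)
      = f (e • y + fun i => c i • u) := congrArg f (funext fun _ => add_comm _ _)
    _ = f (e • y) + ∑ i, c i • f (Function.update (e • y) i u) :=
        alternatingMap_add_smul_const f (e • y) c u
    _ = e ^ (d + 1) • f y + e ^ d • ∑ i, c i • f (Function.update y i u) := by
        simp only [scale_all, scale_others, Finset.smul_sum, smul_comm (e ^ d)]
    _ = e ^ (d + 1) • f y +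
          e ^ d • ∑ i : Fin (d + 1), ((-1) ^ (i : ℕ) * c i) • f (Fin.cons u (i.removeNth y)) := by
        simp only [alternatingMap_update_eq_neg_one_pow_smul, smul_smul, mul_comm (c _)]

end AlternatingMap

/-- The multilinear identity behind Lemma 3.3: for an alternating `(d+1)`-linear form `A`
on a real module `V` (arity `d + 1 ≥ 1`),
`A(c_1·u + e·y_1, …) = e^{d+1}·A(y) + e^d·∑_i (-1)^i c_i·A(u, y_0, …, ŷ_i, …, y_d)`. -/
theorem alternatingMap_smul_add_expansion {V : Type*} [AddCommGroup V] [Module ℝ V]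
    (d : ℕ) (A : V [⋀^Fin (d + 1)]→ₗ[ℝ] ℝ) (u : V) (y : Fin (d + 1) → V)
    (c : Fin (d + 1) → ℝ) (e : ℝ) :
    A (fun i => c i • u + e • y i) =
      e ^ (d + 1) * A y +
        e ^ d * ∑ i : Fin (d + 1), (-1 : ℝ) ^ (i : ℕ) * c i *
          A (Fin.cons u fun j : Fin d => y (i.succAbove j)) :=
  alternatingMap_smul_add_expansion_general A u y c e

end
end
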